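/- Let w = v_{r+1}v_r⋯v_1 be the decomposition of w ∈ W with v_i ∈ W_{Δ_i}^{Δ_{i−1}}, and let 1 ≤ m ≤ r. (1) If ℓ(v_m) < m, then there exists γ ∈ R^+ such that ⟨χ_m, γ^∨⟩ = 1, ℓ(ws_γ) = ℓ(w) + 1, and gr(ws_γ) = gr(w) + e_m. (2) If ℓ(v_m) = m, then there exists γ ∈ R^+ with γ^∨ ∈ Q_P^∨ such that ⟨χ_m, γ^∨⟩ = 1, ℓ(ws_γ) = ℓ(w) + 1 − ⟨2ρ, γ^∨⟩, and gr(q_{γ^∨}) + gr(ws_γ) = gr(w) + e_m. -/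

import Mathlib

/-!
By the exchange condition `ℓ(w s_i) = ℓ(w) ± 1` according to the sign of the root `w α_i`.  Hence
`v` has minimal length in `v W_S` exactly when it sends the simple roots of `S` to positive roots;
then `ℓ(v u) = ℓ(v) + ℓ(u)` for `u ∈ W_S`, and the minimal representative of a coset is unique.  So
the factors `v_i` are determined by their product, and their lengths add up to its length.

For `j ≤ r` the elements of `W_{Δ_j}^{Δ_{j-1}}` are the cycles `s_{k+1} ⋯ s_j` with `0 ≤ k ≤ j`.
The root `α_{a+1} + ⋯ + α_b` plays the role of `ε_a - ε_b`, and `W_P` permutes the indices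
`0, …, r`, which yields all the commutation rules that are needed.

Part (1): if `v_m = s_{k+1} ⋯ s_m` with `k ≥ 1`, replacing `v_m` by `s_k v_m` multiplies `w` on the
right by `s_γ`, where `γ = (v_{m-1} ⋯ v_1)⁻¹ (α_k + ⋯ + α_m)`.  The `m`-th coordinates of `γ` and
`γ^∨` are `1` because `W_{Δ_{m-1}}` does not change them.

Part (2): if `v_m = s_1 ⋯ s_m`, take `γ = α_a + ⋯ + α_m`, where `a` is least such that
`v_a, …, v_{m-1}` are all nontrivial, so that `a = 1` or `v_{a-1} = 1`.  In `w s_γ` the factor `v_m`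
becomes trivial, each of `v_a, …, v_{m-1}` loses its first letter, and `v_{a-1} = 1` becomes
`s_1 ⋯ s_{a-1}`; this matches `gr(q_{γ^∨})` in every coordinate.  The length formula is the sum of
the coordinates, since the total degree of `q_λ` is `⟨2ρ, λ⟩`.
-/

open scoped BigOperators

/-- A reduced crystallographic root system with a fixed base `α_1, …, α_n` of simple
roots, bundled with its Weyl group `W`.  A root `γ` is recorded by its integer
coordinate vector in the basis of simple roots (so the `i`-th simple root is
`Pi.single i 1`), and `cor γ` is the coordinate vector of the coroot `γ^∨` in the
basis of simple coroots (hence `cor γ i = ⟨χ_i, γ^∨⟩` for the fundamental weights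
`χ_i`).  `A i j = ⟨α_i, α_j^∨⟩` is the Cartan matrix, `σ γ` is the reflection `s_γ`
and `act` is the action of the Weyl group on the root lattice. -/
structure RootSystemData (n : ℕ) where
  A : Fin n → Fin n → ℤ
  R : Finset (Fin n → ℤ)
  cor : (Fin n → ℤ) → (Fin n → ℤ)
  W : Type
  [grp : Group W]
  σ : (Fin n → ℤ) → W
  act : W → (Fin n → ℤ) → (Fin n → ℤ)
  simple_mem : ∀ i : Fin n, (Pi.single i 1 : Fin n → ℤ) ∈ R
  root_ne_zero : ∀ γ ∈ R, γ ≠ 0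
  neg_mem : ∀ γ ∈ R, -γ ∈ R
  pos_or_neg : ∀ γ ∈ R, (∀ i, 0 ≤ γ i) ∨ (∀ i, γ i ≤ 0)
  reduced : ∀ γ ∈ R, ∀ k : ℤ, k • γ ∈ R → k = 1 ∨ k = -1
  cor_simple : ∀ i : Fin n, cor (Pi.single i 1) = Pi.single i 1
  cor_neg : ∀ γ ∈ R, cor (-γ) = -(cor γ)
  pair_self : ∀ γ ∈ R, (∑ i, ∑ j, γ i * A i j * cor γ j) = 2
  act_one : ∀ x, act 1 x = x
  act_mul : ∀ w w' x, act (w * w') x = act w (act w' x)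
  act_refl : ∀ γ ∈ R, ∀ x, act (σ γ) x = x - (∑ i, ∑ j, x i * A i j * cor γ j) • γ
  act_mem : ∀ (w : W), ∀ γ ∈ R, act w γ ∈ R
  cor_refl : ∀ γ ∈ R, ∀ β ∈ R,
    cor (act (σ γ) β) = cor β - (∑ i, ∑ j, γ i * A i j * cor β j) • cor γ
  refl_sq : ∀ γ ∈ R, σ γ * σ γ = 1
  refl_act : ∀ (w : W), ∀ γ ∈ R, σ (act w γ) = w * σ γ * w⁻¹
  act_faithful : ∀ w w' : W, (∀ γ ∈ R, act w γ = act w' γ) → w = w'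
  generated : ∀ w : W, ∃ l : List (Fin n), w = (l.map fun i => σ (Pi.single i 1)).prod

namespace RootSystemData

instance {n : ℕ} (c : RootSystemData n) : Group c.W := c.grp

/-- the pairing `⟨x, λ⟩` between an element `x` of the root lattice (coordinates in
the basis of simple roots) and an element `λ` of the coroot lattice (coordinates in
the basis of simple coroots) -/
def pair {n : ℕ} (c : RootSystemData n) (x lam : Fin n → ℤ) : ℤ :=
  ∑ i, ∑ j, x i * c.A i j * lam j

/-- the `i`-th simple root -/
def sroot {n : ℕ} (_c : RootSystemData n) (i : Fin n) : Fin n → ℤ := Pi.single i 1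

/-- the simple reflection `s_i` -/
def s {n : ℕ} (c : RootSystemData n) (i : Fin n) : c.W := c.σ (c.sroot i)

/-- `s_{α_{t+1}}` for a `0`-based natural number index `t` (`= 1` when out of range) -/
def sN {n : ℕ} (c : RootSystemData n) (t : ℕ) : c.W := if h : t < n then c.s ⟨t, h⟩ else 1

/-- `⟨2ρ, λ⟩ = Σ_{β ∈ R^+} ⟨β, λ⟩`, where `ρ` is the half-sum of the positive roots -/
def pairTwoRho {n : ℕ} (c : RootSystemData n) (lam : Fin n → ℤ) : ℤ :=
  ∑ β ∈ c.R, if ∀ i, 0 ≤ β i then c.pair β lam else 0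

/-- the length of `w ∈ W` with respect to the simple reflections -/
noncomputable def len {n : ℕ} (c : RootSystemData n) (w : c.W) : ℕ :=
  sInf {k | ∃ l : List (Fin n), l.length = k ∧ (l.map c.s).prod = w}

/-- the parabolic subgroup `W_S` generated by the simple reflections indexed by `S` -/
def Wsub {n : ℕ} (c : RootSystemData n) (S : Finset (Fin n)) : Subgroup c.W :=
  Subgroup.closure (c.s '' ↑S)

/-- `w ∈ W_T^S`: `w ∈ W_T` and `w` has minimal length in the coset `w W_S` -/
def MinRep {n : ℕ} (c : RootSystemData n) (T S : Finset (Fin n)) (w : c.W) : Prop :=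
  w ∈ c.Wsub T ∧ ∀ u ∈ c.Wsub S, c.len w ≤ c.len (w * u)

/-- `w` is the longest element of `W_S` -/
def IsLongest {n : ℕ} (c : RootSystemData n) (S : Finset (Fin n)) (w : c.W) : Prop :=
  w ∈ c.Wsub S ∧ ∀ v ∈ c.Wsub S, c.len v ≤ c.len w

end RootSystemData

/-- the support of `γ` is contained in `S`, i.e. `γ` lies in the span of
`{α_i : i ∈ S}` (for a root `γ`, membership in `R_S`) -/
def suppIn {n : ℕ} (S : Finset (Fin n)) (γ : Fin n → ℤ) : Prop :=
  ∀ i, i ∉ S → γ i = 0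

/-- `Δ_j` for `0 ≤ j ≤ r+1`: the index set of the first `j` simple roots for `j ≤ r`,
and all of `Δ` for `j = r+1`.  (Indices of simple roots are `0`-based, so
`α_1, …, α_j` correspond to the indices `0, …, j-1`.) -/
def deltaSet (n r j : ℕ) : Finset (Fin n) :=
  if j = r + 1 then Finset.univ else Finset.univ.filter fun i => (i : ℕ) < j

namespace RootSystemData

/-- `v 0, …, v r` (standing for `v_1, …, v_{r+1}`) is the decomposition of `w`
associated to `(Δ_P, Υ)`:  each `v_i ∈ W_{Δ_i}^{Δ_{i-1}}` and `w = v_{r+1} v_r ⋯ v_1`. -/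
def IsDecomp {n : ℕ} (c : RootSystemData n) (r : ℕ) (w : c.W)
    (v : Fin (r + 1) → c.W) : Prop :=
  (∀ k : Fin (r + 1), c.MinRep (deltaSet n r ((k : ℕ) + 1)) (deltaSet n r (k : ℕ)) (v k)) ∧
    w = (List.ofFn v).reverse.prod

/-- the first `m` simple roots `α_1, …, α_m` form a path of type `A_m`:
`⟨α_i, α_j^∨⟩ = -1` if `|i-j| = 1` and `⟨α_i, α_j^∨⟩ = 0` if `|i-j| ≥ 2`. -/
def PathA {n : ℕ} (c : RootSystemData n) (m : ℕ) : Prop :=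
  ∀ i j : Fin n, (i : ℕ) < m → (j : ℕ) < m →
    (((i : ℕ) + 1 = (j : ℕ) ∨ (j : ℕ) + 1 = (i : ℕ)) → c.A i j = -1) ∧
    ((i : ℕ) + 2 ≤ (j : ℕ) ∨ (j : ℕ) + 2 ≤ (i : ℕ) → c.A i j = 0)

/-- `u_{[k,m]} = s_k s_{k+1} ⋯ s_m` (`1`-based indices; `u_{[k,m]} = 1` for `k > m`) -/
def uu {n : ℕ} (c : RootSystemData n) (k m : ℕ) : c.W :=
  ((List.range' k (m + 1 - k)).map fun t => c.sN (t - 1)).prod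

/-- `u_i^{(m)} = s_{m-i+1} s_{m-i+2} ⋯ s_m` -/
def uElt {n : ℕ} (c : RootSystemData n) (i m : ℕ) : c.W := c.uu (m - i + 1) m

end RootSystemData

/-- strict lexicographic order on `Fin m → ℤ` -/
def lexLT {m : ℕ} (x y : Fin m → ℤ) : Prop :=
  ∃ j, x j < y j ∧ ∀ k, k < j → x k = y k

/-- lexicographic order on `Fin m → ℤ` -/
def lexLE {m : ℕ} (x y : Fin m → ℤ) : Prop := x = y ∨ lexLT x y

/-- the grading `gr(q_{α_{j+1}^∨}) ∈ ℤ^{r+1}` (for the `0`-based index `j < r`), when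
`Δ_P` is of type `A_r`: in `1`-based terms, `gr(q_{α_1^∨}) = 2·e_1` and
`gr(q_{α_j^∨}) = (1-j)·e_{j-1} + (1+j)·e_j` for `2 ≤ j ≤ r`. -/
def grQ (r j : ℕ) : Fin (r + 1) → ℤ := fun k =>
  (if (k : ℕ) = j then (j : ℤ) + 2 else 0) + (if (k : ℕ) + 1 = j then -(j : ℤ) else 0)

/-- the grading `gr(q_λ)` for `λ ∈ Q_P^∨` (coordinates in simple coroots), extended
additively from the `gr(q_{α_j^∨})`, when `Δ_P` is of type `A_r` -/
def grQlam (n r : ℕ) (lam : Fin n → ℤ) : Fin (r + 1) → ℤ :=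
  fun k => ∑ j, lam j * grQ r (j : ℕ) k

namespace RootSystemData

/-! ### The action on roots -/

section Action

variable {n : ℕ} (c : RootSystemData n)

lemma pair_add_left (x y l : Fin n → ℤ) : c.pair (x + y) l = c.pair x l + c.pair y l := by
  simp [pair, add_mul, Finset.sum_add_distrib]

lemma pair_sub_left (x y l : Fin n → ℤ) : c.pair (x - y) l = c.pair x l - c.pair y l := by
  simp [pair, sub_mul, Finset.sum_sub_distrib]

lemma pair_smul_left (k : ℤ) (x l : Fin n → ℤ) : c.pair (k • x) l = k * c.pair x l := by
  simp [pair, Finset.mul_sum, mul_assoc]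

lemma pair_single_right (x : Fin n → ℤ) (i : Fin n) :
    c.pair x (Pi.single i 1) = ∑ k, x k * c.A k i := by
  simp [pair, Pi.single_apply]

lemma pair_eq_sum_single (x l : Fin n → ℤ) :
    c.pair x l = ∑ j, l j * c.pair x (Pi.single j 1) := by
  simp only [pair_single_right, Finset.mul_sum]
  rw [pair, Finset.sum_comm]
  exact Finset.sum_congr rfl fun j _ => Finset.sum_congr rfl fun i _ => by ring

lemma pair_sroot_single (i j : Fin n) : c.pair (c.sroot i) (Pi.single j 1) = c.A i j := by
  simp [pair_single_right, sroot, Pi.single_apply]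

lemma pair_sroot_self (i : Fin n) : c.pair (c.sroot i) (Pi.single i 1) = 2 := by
  have h := c.pair_self _ (c.simple_mem i)
  rwa [c.cor_simple] at h

lemma A_self (i : Fin n) : c.A i i = 2 := by
  rw [← pair_sroot_single, pair_sroot_self]

lemma sroot_mem (i : Fin n) : c.sroot i ∈ c.R := c.simple_mem i

lemma sroot_nonneg (i : Fin n) : 0 ≤ c.sroot i := Pi.single_nonneg.2 zero_le_one

lemma nonneg_or_nonpos {β : Fin n → ℤ} (hβ : β ∈ c.R) : 0 ≤ β ∨ β ≤ 0 := c.pos_or_neg β hβ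

lemma not_nonpos_of_nonneg {β : Fin n → ℤ} (hβ : β ∈ c.R) (h : 0 ≤ β) : ¬ β ≤ 0 :=
  fun h' => c.root_ne_zero β hβ (le_antisymm h' h)

lemma act_s (i : Fin n) (x : Fin n → ℤ) :
    c.act (c.s i) x = x - c.pair x (Pi.single i 1) • c.sroot i := by
  have h := c.act_refl _ (c.simple_mem i) x
  rwa [c.cor_simple] at h

lemma act_s_sroot (i : Fin n) : c.act (c.s i) (c.sroot i) = -c.sroot i := by
  rw [act_s, pair_sroot_self, two_smul, sub_add_cancel_left]

lemma s_mul_s (i : Fin n) : c.s i * c.s i = 1 := c.refl_sq _ (c.simple_mem i)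

lemma s_inv (i : Fin n) : (c.s i)⁻¹ = c.s i := inv_eq_of_mul_eq_one_left (c.s_mul_s i)

lemma act_s_act_s (i : Fin n) (x : Fin n → ℤ) : c.act (c.s i) (c.act (c.s i) x) = x := by
  rw [← c.act_mul, s_mul_s, c.act_one]

lemma mul_σ (w : c.W) {β : Fin n → ℤ} (hβ : β ∈ c.R) :
    w * c.σ β = c.σ (c.act w β) * w := by
  rw [c.refl_act w β hβ, inv_mul_cancel_right]

lemma exists_word (w : c.W) : ∃ l : List (Fin n), (l.map c.s).prod = w :=
  (c.generated w).imp fun _ => Eq.symm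

lemma act_add (w : c.W) (x y : Fin n → ℤ) : c.act w (x + y) = c.act w x + c.act w y := by
  obtain ⟨l, rfl⟩ := c.exists_word w
  induction l generalizing x y with
  | nil => simp only [List.map_nil, List.prod_nil, c.act_one]
  | cons i l ih =>
    simp only [List.map_cons, List.prod_cons, c.act_mul, ih, act_s, pair_add_left, add_smul]
    abel

/-- The action of a fixed element of the Weyl group as an additive map. -/
def actHom (w : c.W) : (Fin n → ℤ) →+ (Fin n → ℤ) := AddMonoidHom.mk' (c.act w) (c.act_add w)

lemma act_neg (w : c.W) (x : Fin n → ℤ) : c.act w (-x) = -c.act w x := map_neg (c.actHom w) x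

lemma act_eq_sum_sroot (w : c.W) (x : Fin n → ℤ) :
    c.act w x = ∑ i, x i • c.act w (c.sroot i) := by
  have hx : x = ∑ i, x i • c.sroot i := by
    funext j
    simp [sroot, Pi.single_apply]
  calc c.actHom w x = c.actHom w (∑ i, x i • c.sroot i) := by rw [← hx]
    _ = ∑ i, x i • c.actHom w (c.sroot i) := by simp only [map_sum, map_zsmul]

lemma eq_sroot_of_forall_ne {β : Fin n → ℤ} (hβ : β ∈ c.R) (hpos : 0 ≤ β) {i : Fin n}
    (h : ∀ j ≠ i, β j = 0) : β = c.sroot i := by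
  have hβi : β = β i • c.sroot i := by
    funext j
    rcases eq_or_ne j i with rfl | hj
    · simp [sroot]
    · simp [sroot, hj, h j hj]
  have hi : 0 ≤ β i := hpos i
  rcases c.reduced _ (c.sroot_mem i) (β i) (hβi ▸ hβ) with h1 | h1
  · rwa [h1, one_smul] at hβi
  · omega

lemma act_s_nonneg {β : Fin n → ℤ} (hβ : β ∈ c.R) (hpos : 0 ≤ β) {i : Fin n}
    (hne : β ≠ c.sroot i) : 0 ≤ c.act (c.s i) β := by
  -- Some coordinate of `β` other than the `i`-th is positive, and `s_i` does not change it.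
  obtain ⟨j, hji, hj⟩ : ∃ j ≠ i, β j ≠ 0 := by
    by_contra! h
    exact hne (c.eq_sroot_of_forall_ne hβ hpos h)
  refine (c.nonneg_or_nonpos (c.act_mem (c.s i) β hβ)).resolve_right fun h => hj ?_
  have hle : β j ≤ 0 := by simpa [act_s, sroot, hji] using h j
  exact le_antisymm hle (hpos j)

end Action

/-! ### Length and descents -/

section Length

variable {n : ℕ} (c : RootSystemData n)

lemma exchange_condition {i : Fin n} {l : List (Fin n)}
    (h : c.act (l.map c.s).prod (c.sroot i) ≤ 0) :
    ∃ l' : List (Fin n), l'.length + 1 = l.length ∧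
      (l'.map c.s).prod = (l.map c.s).prod * c.s i := by
  induction l with
  | nil =>
    simp only [List.map_nil, List.prod_nil, c.act_one] at h
    exact absurd h (c.not_nonpos_of_nonneg (c.sroot_mem i) (c.sroot_nonneg i))
  | cons j l ih =>
    simp only [List.map_cons, List.prod_cons, c.act_mul] at h ⊢
    set u := (l.map c.s).prod
    have hβ := c.act_mem u _ (c.sroot_mem i)
    rcases c.nonneg_or_nonpos hβ with hpos | hneg
    · have hβj : c.act u (c.sroot i) = c.sroot j := by
        by_contra hne
        exact c.not_nonpos_of_nonneg (c.act_mem _ _ hβ) (c.act_s_nonneg hβ hpos hne) h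
      have hus : u * c.s i = c.s j * u := by
        rw [s, mul_σ c u (c.sroot_mem i), hβj, s]
      exact ⟨l, rfl, by rw [mul_assoc, hus, ← mul_assoc, s_mul_s, one_mul]⟩
    · obtain ⟨l', hlen, hprod⟩ := ih hneg
      exact ⟨j :: l', by simp [hlen], by simp [hprod, mul_assoc]⟩

lemma len_prod_le (l : List (Fin n)) : c.len (l.map c.s).prod ≤ l.length :=
  Nat.sInf_le ⟨l, rfl, rfl⟩

lemma exists_reduced_word (w : c.W) :
    ∃ l : List (Fin n), l.length = c.len w ∧ (l.map c.s).prod = w := by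
  obtain ⟨l, hl⟩ := c.exists_word w
  exact Nat.sInf_mem (s := {k | ∃ l : List (Fin n), l.length = k ∧ (l.map c.s).prod = w})
    ⟨l.length, l, rfl, hl⟩

lemma len_one : c.len 1 = 0 := by
  simpa using c.len_prod_le []

lemma eq_one_of_len_eq_zero {w : c.W} (h : c.len w = 0) : w = 1 := by
  obtain ⟨l, hlen, rfl⟩ := c.exists_reduced_word w
  simp [List.length_eq_zero_iff.1 (hlen.trans h)]

lemma len_mul_s_le (w : c.W) (i : Fin n) : c.len (w * c.s i) ≤ c.len w + 1 := by
  obtain ⟨l, hlen, hprod⟩ := c.exists_reduced_word w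
  simpa [hlen, hprod] using c.len_prod_le (l ++ [i])

lemma len_mul_s_of_nonpos {w : c.W} {i : Fin n} (h : c.act w (c.sroot i) ≤ 0) :
    c.len (w * c.s i) + 1 = c.len w := by
  apply le_antisymm
  · obtain ⟨l, hlen, rfl⟩ := c.exists_reduced_word w
    obtain ⟨l', hlen', hprod⟩ := c.exchange_condition h
    rw [← hlen, ← hlen', ← hprod]
    exact Nat.succ_le_succ (c.len_prod_le l')
  · simpa only [mul_assoc, s_mul_s, mul_one] using c.len_mul_s_le (w * c.s i) i

lemma len_mul_s_of_nonneg {w : c.W} {i : Fin n} (h : 0 ≤ c.act w (c.sroot i)) :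
    c.len (w * c.s i) = c.len w + 1 := by
  have hneg : c.act (w * c.s i) (c.sroot i) ≤ 0 := by
    rwa [c.act_mul, act_s_sroot, act_neg, neg_nonpos]
  simpa only [mul_assoc, s_mul_s, mul_one] using (c.len_mul_s_of_nonpos hneg).symm

end Length

/-! ### Parabolic subgroups and minimal coset representatives -/

section Parabolic

variable {n : ℕ} {c : RootSystemData n} {S T : Finset (Fin n)}

lemma s_mem_Wsub {i : Fin n} (hi : i ∈ S) : c.s i ∈ c.Wsub S :=
  Subgroup.subset_closure ⟨i, hi, rfl⟩

lemma Wsub_mono (h : S ⊆ T) : c.Wsub S ≤ c.Wsub T :=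
  Subgroup.closure_mono (Set.image_mono (Finset.coe_subset.2 h))

lemma Wsub_induction_right {motive : (u : c.W) → u ∈ c.Wsub S → Prop}
    (one : motive 1 (one_mem _))
    (mul_s : ∀ i (hi : i ∈ S) u (hu : u ∈ c.Wsub S), motive u hu →
      motive (u * c.s i) (mul_mem hu (s_mem_Wsub hi)))
    {u : c.W} (hu : u ∈ c.Wsub S) : motive u hu := by
  induction hu using Subgroup.closure_induction_right with
  | one => exact one
  | mul_right u hu y hy ih =>
    obtain ⟨i, hi, rfl⟩ := hy
    exact mul_s i hi u hu ih
  | mul_inv_cancel u hu y hy ih =>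
    obtain ⟨i, hi, rfl⟩ := hy
    simpa only [s_inv] using mul_s i hi u hu ih

lemma Wsub_induction_left {motive : (u : c.W) → u ∈ c.Wsub S → Prop}
    (one : motive 1 (one_mem _))
    (s_mul : ∀ i (hi : i ∈ S) u (hu : u ∈ c.Wsub S), motive u hu →
      motive (c.s i * u) (mul_mem (s_mem_Wsub hi) hu))
    {u : c.W} (hu : u ∈ c.Wsub S) : motive u hu := by
  induction hu using Subgroup.closure_induction_left with
  | one => exact one
  | mul_left y hy u hu ih =>
    obtain ⟨i, hi, rfl⟩ := hy
    exact s_mul i hi u hu ih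
  | inv_mul_cancel y hy u hu ih =>
    obtain ⟨i, hi, rfl⟩ := hy
    simpa only [s_inv] using s_mul i hi u hu ih

lemma act_apply_of_mem_Wsub {u : c.W} (hu : u ∈ c.Wsub S) {j : Fin n} (hj : j ∉ S)
    (x : Fin n → ℤ) : c.act u x j = x j := by
  induction hu using Wsub_induction_left with
  | one => rw [c.act_one]
  | s_mul i hi u _ ih =>
    have hji : j ≠ i := (ne_of_mem_of_not_mem hi hj).symm
    simp [c.act_mul, act_s, sroot, hji, ih]

lemma cor_act_apply_of_mem_Wsub {u : c.W} (hu : u ∈ c.Wsub S) {j : Fin n} (hj : j ∉ S)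
    {β : Fin n → ℤ} (hβ : β ∈ c.R) : c.cor (c.act u β) j = c.cor β j := by
  induction hu using Wsub_induction_left with
  | one => rw [c.act_one]
  | s_mul i hi u _ ih =>
    have hji : j ≠ i := (ne_of_mem_of_not_mem hi hj).symm
    have hcor := congrFun (c.cor_refl _ (c.sroot_mem i) _ (c.act_mem u β hβ)) j
    rw [c.act_mul, s, hcor]
    simp [sroot, c.cor_simple, hji, ih]

lemma act_nonneg_of_mem_Wsub {u : c.W} (hu : u ∈ c.Wsub S) {j : Fin n} (hj : j ∉ S)
    {β : Fin n → ℤ} (hβ : β ∈ c.R) (hβj : 0 < β j) : 0 ≤ c.act u β := by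
  refine (c.nonneg_or_nonpos (c.act_mem u β hβ)).resolve_right fun h => ?_
  exact absurd (act_apply_of_mem_Wsub hu hj β ▸ h j) hβj.not_ge

lemma act_eq_self_of_mem_Wsub {u : c.W} (hu : u ∈ c.Wsub S) {β : Fin n → ℤ}
    (hβ : ∀ i ∈ S, c.pair β (Pi.single i 1) = 0) : c.act u β = β := by
  induction hu using Wsub_induction_left with
  | one => rw [c.act_one]
  | s_mul i hi u _ ih => rw [c.act_mul, ih, act_s, hβ i hi, zero_smul, sub_zero]

lemma commute_σ_of_mem_Wsub {u : c.W} (hu : u ∈ c.Wsub S) {β : Fin n → ℤ} (hR : β ∈ c.R)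
    (hβ : ∀ i ∈ S, c.pair β (Pi.single i 1) = 0) : Commute u (c.σ β) := by
  rw [Commute, SemiconjBy, mul_σ c u hR, act_eq_self_of_mem_Wsub hu hβ]

/-- `v` sends the simple roots of `S` to positive roots; this is the root-theoretic form of
minimality of the length of `v` in `v W_S`. -/
def IsPositiveOn (c : RootSystemData n) (S : Finset (Fin n)) (v : c.W) : Prop :=
  ∀ i ∈ S, 0 ≤ c.act v (c.sroot i)

lemma IsPositiveOn.act_nonneg {v : c.W} (hv : c.IsPositiveOn S v) {x : Fin n → ℤ} (hx : 0 ≤ x)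
    (hS : suppIn S x) : 0 ≤ c.act v x := by
  rw [act_eq_sum_sroot]
  refine Finset.sum_nonneg fun i _ => ?_
  by_cases hi : i ∈ S
  · exact smul_nonneg (hx i) (hv i hi)
  · rw [hS i hi, zero_smul]

lemma suppIn_act_sroot {u : c.W} (hu : u ∈ c.Wsub S) {i : Fin n} (hi : i ∈ S) :
    suppIn S (c.act u (c.sroot i)) := by
  intro j hj
  rw [act_apply_of_mem_Wsub hu hj, sroot, Pi.single_eq_of_ne (ne_of_mem_of_not_mem hi hj).symm]

lemma IsPositiveOn.len_mul {v : c.W} (hv : c.IsPositiveOn S v) {u : c.W} (hu : u ∈ c.Wsub S) :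
    c.len (v * u) = c.len v + c.len u := by
  induction hu using Wsub_induction_right with
  | one => rw [mul_one, len_one, add_zero]
  | mul_s i hi u hu ih =>
    have hsupp := suppIn_act_sroot hu hi
    rw [← mul_assoc]
    rcases c.nonneg_or_nonpos (c.act_mem u _ (c.sroot_mem i)) with hpos | hneg
    · have hpos' : 0 ≤ c.act (v * u) (c.sroot i) := by
        rw [c.act_mul]
        exact hv.act_nonneg hpos hsupp
      rw [c.len_mul_s_of_nonneg hpos, c.len_mul_s_of_nonneg hpos', ih, add_assoc]
    · have hneg' : c.act (v * u) (c.sroot i) ≤ 0 := by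
        rw [c.act_mul, ← neg_nonneg, ← act_neg]
        exact hv.act_nonneg (neg_nonneg.2 hneg) fun j hj => by simp [hsupp j hj]
      have hlen := c.len_mul_s_of_nonpos hneg
      have hlen' := c.len_mul_s_of_nonpos hneg'
      omega

lemma MinRep.isPositiveOn {v : c.W} (h : c.MinRep T S v) : c.IsPositiveOn S v := by
  intro i hi
  refine (c.nonneg_or_nonpos (c.act_mem v _ (c.sroot_mem i))).resolve_right fun hneg => ?_
  have hdesc := c.len_mul_s_of_nonpos hneg
  have hmin := h.2 _ (s_mem_Wsub hi)
  omega

lemma IsPositiveOn.minRep {v : c.W} (h : c.IsPositiveOn S v) (hT : v ∈ c.Wsub T) :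
    c.MinRep T S v :=
  ⟨hT, fun u hu => by rw [h.len_mul hu]; exact Nat.le_add_right _ _⟩

lemma IsPositiveOn.eq_of_mul_eq_mul {v v' u u' : c.W} (hv : c.IsPositiveOn S v)
    (hv' : c.IsPositiveOn S v') (hu : u ∈ c.Wsub S) (hu' : u' ∈ c.Wsub S)
    (h : v * u = v' * u') : v = v' := by
  have hvv' : v = v' * (u' * u⁻¹) := by rw [← mul_assoc, ← h, mul_inv_cancel_right]
  have hv'v : v' = v * (u * u'⁻¹) := by rw [← mul_assoc, h, mul_inv_cancel_right]
  have hlen := hv'.len_mul (mul_mem hu' (inv_mem hu))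
  have hlen' := hv.len_mul (mul_mem hu (inv_mem hu'))
  rw [← hvv'] at hlen
  rw [← hv'v] at hlen'
  have hone : u' * u⁻¹ = 1 := c.eq_one_of_len_eq_zero (by omega)
  rw [hvv', hone, mul_one]

end Parabolic

/-! ### The pairing with `2ρ` -/

section TwoRho

variable {n : ℕ} (c : RootSystemData n)

lemma pairTwoRho_eq_sum_filter [DecidablePred fun β : Fin n → ℤ => 0 ≤ β] (l : Fin n → ℤ) :
    c.pairTwoRho l = ∑ β ∈ c.R with 0 ≤ β, c.pair β l := by
  rw [Finset.sum_filter]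
  exact Finset.sum_congr rfl fun β _ => by congr

lemma pair_act_s_single (i : Fin n) (β : Fin n → ℤ) :
    c.pair (c.act (c.s i) β) (Pi.single i 1) = -c.pair β (Pi.single i 1) := by
  rw [act_s, pair_sub_left, pair_smul_left, pair_sroot_self]
  ring

lemma pairTwoRho_single (i : Fin n) : c.pairTwoRho (Pi.single i 1) = 2 := by
  classical
  have hmem : c.sroot i ∈ c.R.filter (0 ≤ ·) :=
    Finset.mem_filter.2 ⟨c.sroot_mem i, c.sroot_nonneg i⟩
  -- `s_i` permutes the other positive roots and changes the sign of their pairing with `α_i^∨`.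
  have hzero : ∑ β ∈ (c.R.filter (0 ≤ ·)).erase (c.sroot i), c.pair β (Pi.single i 1) = 0 := by
    refine Finset.sum_involution (fun β _ => c.act (c.s i) β) ?_ ?_ ?_ fun β _ => c.act_s_act_s i β
    · intro β _
      rw [pair_act_s_single, add_neg_cancel]
    · intro β _ hne heq
      have hsign := c.pair_act_s_single i β
      rw [heq] at hsign
      omega
    · intro β hβ
      simp only [Finset.mem_erase, Finset.mem_filter] at hβ ⊢
      obtain ⟨hne, hR, hpos⟩ := hβ
      refine ⟨fun heq => ?_, c.act_mem _ _ hR, c.act_s_nonneg hR hpos hne⟩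
      have hβi : β = -c.sroot i := by rw [← c.act_s_act_s i β, heq, act_s_sroot]
      exact c.not_nonpos_of_nonneg hR hpos (hβi ▸ neg_nonpos.2 (c.sroot_nonneg i))
  rw [pairTwoRho_eq_sum_filter, ← Finset.add_sum_erase _ _ hmem, hzero, pair_sroot_self, add_zero]

lemma pairTwoRho_eq_sum (l : Fin n → ℤ) : c.pairTwoRho l = ∑ j, l j * 2 := by
  classical
  calc c.pairTwoRho l
      = ∑ β ∈ c.R with 0 ≤ β, ∑ j, l j * c.pair β (Pi.single j 1) := by
        simp only [pairTwoRho_eq_sum_filter, ← pair_eq_sum_single]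
    _ = ∑ j, l j * c.pairTwoRho (Pi.single j 1) := by
        simp only [pairTwoRho_eq_sum_filter, Finset.mul_sum]
        exact Finset.sum_comm
    _ = ∑ j, l j * 2 := by simp only [pairTwoRho_single]

end TwoRho

/-! ### Products along a chain of parabolic subgroups -/

section Tower

variable {n : ℕ} {c : RootSystemData n}

/-- The product `f (j-1) ⋯ f 1 f 0`, in the order of the decomposition `v_{r+1} ⋯ v_2 v_1`. -/
def descProd (f : ℕ → c.W) : ℕ → c.W
  | 0 => 1
  | j + 1 => f j * descProd f j

lemma reverse_ofFn_prod (f : ℕ → c.W) (N : ℕ) :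
    (List.ofFn fun i : Fin N => f i).reverse.prod = descProd f N := by
  induction N with
  | zero => simp [descProd]
  | succ N ih => simp [List.ofFn_succ', List.concat_eq_append, descProd, ih, -List.ofFn_succ]

lemma descProd_congr {f g : ℕ → c.W} {j : ℕ} (h : ∀ i < j, f i = g i) :
    descProd f j = descProd g j := by
  induction j with
  | zero => rfl
  | succ j ih =>
    rw [descProd, descProd, h j (Nat.lt_succ_self j), ih fun i hi => h i (Nat.lt_succ_of_lt hi)]

lemma descProd_eq_mul_of_eq_above {f g : ℕ → c.W} {m N : ℕ} {x : c.W}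
    (hm : descProd g m = descProd f m * x) (hmN : m ≤ N) (h : ∀ i, m ≤ i → g i = f i) :
    descProd g N = descProd f N * x := by
  induction N, hmN using Nat.le_induction with
  | base => exact hm
  | succ j hj ih => rw [descProd, descProd, ih, h j hj, mul_assoc]

variable {S : ℕ → Finset (Fin n)} {N : ℕ} {f g : ℕ → c.W}

/-- The elements `f 0, …, f (N-1)` are minimal representatives along the chain
`S 0 ⊆ S 1 ⊆ ⋯ ⊆ S N`: `f j` stands for `v_{j+1}`, and values beyond `N` are irrelevant. -/
def IsTower (c : RootSystemData n) (S : ℕ → Finset (Fin n)) (N : ℕ) (f : ℕ → c.W) : Prop :=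
  ∀ j < N, c.MinRep (S (j + 1)) (S j) (f j)

lemma IsTower.update (hf : c.IsTower S N f) {m : ℕ} {x : c.W}
    (hx : c.MinRep (S (m + 1)) (S m) x) : c.IsTower S N (Function.update f m x) := by
  intro j hj
  rcases eq_or_ne j m with rfl | hjm
  · rwa [Function.update_self]
  · rw [Function.update_of_ne hjm]
    exact hf j hj

lemma IsTower.descProd_mem (hf : c.IsTower S N f) (hS : ∀ j < N, S j ⊆ S (j + 1)) {j : ℕ}
    (hj : j ≤ N) : descProd f j ∈ c.Wsub (S j) := by
  induction j with
  | zero => exact one_mem _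
  | succ j ih => exact mul_mem (hf j hj).1 (Wsub_mono (hS j hj) (ih (Nat.le_of_succ_le hj)))

lemma IsTower.len_descProd (hf : c.IsTower S N f) (hS : ∀ j < N, S j ⊆ S (j + 1)) {j : ℕ}
    (hj : j ≤ N) : c.len (descProd f j) = ∑ i ∈ Finset.range j, c.len (f i) := by
  induction j with
  | zero => simp [descProd, len_one]
  | succ j ih =>
    have hj' := Nat.le_of_succ_le hj
    rw [Finset.sum_range_succ, ← ih hj', descProd,
      (hf j hj).isPositiveOn.len_mul (hf.descProd_mem hS hj'), add_comm]

lemma IsTower.eq_of_descProd_eq (hf : c.IsTower S N f) (hg : c.IsTower S N g)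
    (hS : ∀ j < N, S j ⊆ S (j + 1)) {j : ℕ} (hj : j ≤ N) (h : descProd f j = descProd g j) :
    ∀ i < j, f i = g i := by
  induction j with
  | zero => exact fun i hi => absurd hi i.not_lt_zero
  | succ j ih =>
    have hj' := Nat.le_of_succ_le hj
    have hfg : f j = g j := (hf j hj).isPositiveOn.eq_of_mul_eq_mul (hg j hj).isPositiveOn
      (hf.descProd_mem hS hj') (hg.descProd_mem hS hj') h
    simp only [descProd, hfg, mul_right_inj] at h
    intro i hi
    rcases Nat.lt_succ_iff_lt_or_eq.1 hi with hi | rfl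
    · exact ih hj' h i hi
    · exact hfg

end Tower

/-! ### Roots of a type `A` path -/

section PathRoot

variable {n : ℕ} {c : RootSystemData n} {r : ℕ}

/-- The vector `α_1 + ⋯ + α_b`. -/
def headSum (n b : ℕ) : Fin n → ℤ := fun i => if (i : ℕ) < b then 1 else 0

/-- The vector `(α_1 + ⋯ + α_b) - (α_1 + ⋯ + α_a)`, that is, the root `α_{a+1} + ⋯ + α_b` if
`a < b`.  It plays the role of `ε_a - ε_b`, with `W_P` permuting the indices `0, …, r`. -/
def pathRoot (n a b : ℕ) : Fin n → ℤ := headSum n b - headSum n a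

lemma headSum_succ {b : ℕ} (hb : b < n) :
    headSum n (b + 1) = headSum n b + Pi.single ⟨b, hb⟩ 1 := by
  funext i
  simp only [headSum, Pi.add_apply, Pi.single_apply, Fin.ext_iff]
  split_ifs <;> omega

lemma pathRoot_succ (c : RootSystemData n) {t : ℕ} (ht : t < n) :
    pathRoot n t (t + 1) = c.sroot ⟨t, ht⟩ := by
  rw [pathRoot, headSum_succ ht, add_sub_cancel_left, sroot]

lemma pathRoot_nonneg {a b : ℕ} (h : a ≤ b) : 0 ≤ pathRoot n a b := by
  intro i
  simp only [pathRoot, headSum, Pi.sub_apply, Pi.zero_apply]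
  split_ifs <;> omega

lemma pathRoot_apply_eq_one {a b : ℕ} {i : Fin n} (ha : a ≤ i) (hb : i < b) :
    pathRoot n a b i = 1 := by
  simp [pathRoot, headSum, ha, hb]

lemma mem_deltaSet {j : ℕ} (hj : j ≤ r) {i : Fin n} : i ∈ deltaSet n r j ↔ (i : ℕ) < j := by
  simp [deltaSet, (Nat.lt_succ_of_le hj).ne]

lemma suppIn_pathRoot {a b : ℕ} (ha : a ≤ r) (hb : b ≤ r) :
    suppIn (deltaSet n r r) (pathRoot n a b) := by
  intro i hi
  rw [mem_deltaSet le_rfl] at hi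
  have hia : ¬ (i : ℕ) < a := by omega
  have hib : ¬ (i : ℕ) < b := by omega
  simp [pathRoot, headSum, hia, hib]

lemma PathA.symm (hA : c.PathA r) {i j : Fin n} (hi : (i : ℕ) < r) (hj : (j : ℕ) < r) :
    c.A i j = c.A j i := by
  obtain ⟨hadj, hfar⟩ := hA i j hi hj
  obtain ⟨hadj', hfar'⟩ := hA j i hj hi
  rcases eq_or_ne i j with rfl | hij
  · rfl
  · have hij' : (i : ℕ) ≠ j := Fin.val_ne_of_ne hij
    by_cases h : (i : ℕ) + 1 = j ∨ (j : ℕ) + 1 = i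
    · rw [hadj h, hadj' h.symm]
    · rw [hfar (by omega), hfar' (by omega)]

lemma PathA.pair_comm (hA : c.PathA r) {x y : Fin n → ℤ} (hx : suppIn (deltaSet n r r) x)
    (hy : suppIn (deltaSet n r r) y) : c.pair x y = c.pair y x := by
  rw [pair, Finset.sum_comm]
  refine Finset.sum_congr rfl fun j _ => Finset.sum_congr rfl fun i _ => ?_
  by_cases hi : i ∈ deltaSet n r r
  · by_cases hj : j ∈ deltaSet n r r
    · rw [hA.symm ((mem_deltaSet le_rfl).1 hi) ((mem_deltaSet le_rfl).1 hj)]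
      ring
    · simp [hy j hj]
  · simp [hx i hi]

lemma PathA.pair_headSum (hA : c.PathA r) (hr : r ≤ n) {t : Fin n} (ht : (t : ℕ) < r) {b : ℕ}
    (hb : b ≤ r) :
    c.pair (headSum n b) (Pi.single t 1) =
      (if b = t + 1 then 1 else 0) - (if b = t then 1 else 0) + if (t : ℕ) = 0 then 1 else 0 := by
  induction b with
  | zero => simp [pair_single_right, headSum, eq_comm]
  | succ b ih =>
    have hbn : b < n := by omega
    obtain ⟨hadj, hfar⟩ := hA ⟨b, hbn⟩ t hb ht
    have hsucc : headSum n (b + 1) = headSum n b + c.sroot ⟨b, hbn⟩ := headSum_succ hbn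
    rw [hsucc, pair_add_left, ih (by omega), pair_sroot_single]
    rcases eq_or_ne b t with rfl | hbt
    · rw [A_self]
      split_ifs <;> omega
    · by_cases hbt' : b + 1 = t ∨ t + 1 = b
      · rw [hadj hbt']
        split_ifs <;> omega
      · rw [hfar (by simp only; omega)]
        split_ifs <;> omega

lemma headSum_swap (c : RootSystemData n) (t : Fin n) (b : ℕ) :
    headSum n (Equiv.swap (t : ℕ) (t + 1) b) =
      headSum n b -
        ((if b = t + 1 then 1 else 0) - (if b = (t : ℕ) then 1 else 0) : ℤ) • c.sroot t := by
  funext i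
  rw [Equiv.swap_apply_def]
  simp only [headSum, sroot, Pi.sub_apply, Pi.smul_apply, Pi.single_apply, Fin.ext_iff,
    smul_eq_mul]
  split_ifs <;> omega

lemma PathA.act_s_pathRoot (hA : c.PathA r) (hr : r ≤ n) {t : Fin n} (ht : (t : ℕ) < r) {a b : ℕ}
    (ha : a ≤ r) (hb : b ≤ r) :
    c.act (c.s t) (pathRoot n a b) =
      pathRoot n (Equiv.swap (t : ℕ) (t + 1) a) (Equiv.swap (t : ℕ) (t + 1) b) := by
  rw [act_s, pathRoot, pathRoot, headSum_swap c, headSum_swap c, pair_sub_left,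
    hA.pair_headSum hr ht ha, hA.pair_headSum hr ht hb]
  module

lemma PathA.act_s_pathRoot_left (hA : c.PathA r) (hr : r ≤ n) {a b : ℕ} (hab : a < b)
    (hb : b < r) :
    c.act (c.s ⟨b, hb.trans_le hr⟩) (pathRoot n a b) = pathRoot n a (b + 1) := by
  rw [hA.act_s_pathRoot hr hb (by omega) hb.le, Equiv.swap_apply_left,
    Equiv.swap_apply_of_ne_of_ne hab.ne (by simp only; omega)]

lemma PathA.pathRoot_mem (hA : c.PathA r) (hr : r ≤ n) {a b : ℕ} (hab : a < b) (hb : b ≤ r) :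
    pathRoot n a b ∈ c.R := by
  induction b, Nat.succ_le_of_lt hab using Nat.le_induction with
  | base =>
    rw [Nat.succ_eq_add_one, pathRoot_succ c (hb.trans hr)]
    exact c.sroot_mem _
  | succ b hab' ih =>
    rw [← hA.act_s_pathRoot_left hr hab' hb]
    exact c.act_mem _ _ (ih hab' (Nat.le_of_succ_le hb))

lemma PathA.cor_pathRoot (hA : c.PathA r) (hr : r ≤ n) {a b : ℕ} (hab : a < b) (hb : b ≤ r) :
    c.cor (pathRoot n a b) = pathRoot n a b := by
  induction b, Nat.succ_le_of_lt hab using Nat.le_induction with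
  | base =>
    rw [Nat.succ_eq_add_one, pathRoot_succ c (hb.trans hr)]
    exact c.cor_simple _
  | succ b hab' ih =>
    have hbn : b < n := Nat.lt_of_lt_of_le hb hr
    have hbr : b ≤ r := Nat.le_of_succ_le hb
    have hsupp : suppIn (deltaSet n r r) (c.sroot ⟨b, hbn⟩) :=
      pathRoot_succ c hbn ▸ suppIn_pathRoot hbr hb
    calc c.cor (pathRoot n a (b + 1))
        = c.cor (c.act (c.s ⟨b, hbn⟩) (pathRoot n a b)) := by
          rw [hA.act_s_pathRoot_left hr hab' hb]
      _ = c.cor (pathRoot n a b) -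
            c.pair (c.sroot ⟨b, hbn⟩) (c.cor (pathRoot n a b)) • c.cor (c.sroot ⟨b, hbn⟩) :=
          c.cor_refl _ (c.sroot_mem _) _ (hA.pathRoot_mem hr hab' hbr)
      _ = pathRoot n a b - c.pair (pathRoot n a b) (c.sroot ⟨b, hbn⟩) • c.sroot ⟨b, hbn⟩ := by
          rw [ih hab' hbr, hA.pair_comm hsupp (suppIn_pathRoot (by omega) hbr), sroot,
            c.cor_simple]
      _ = pathRoot n a (b + 1) := by
          rw [← hA.act_s_pathRoot_left hr hab' hb, act_s, sroot]

end PathRoot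

/-! ### The elements `u_i^{(m)}` -/

section Cycle

variable {n : ℕ} {c : RootSystemData n} {r : ℕ}

lemma sN_eq_s (c : RootSystemData n) {t : ℕ} (ht : t < n) : c.sN t = c.s ⟨t, ht⟩ := dif_pos ht

lemma sN_mul_sN (c : RootSystemData n) (t : ℕ) : c.sN t * c.sN t = 1 := by
  rw [sN]
  split_ifs
  · exact c.s_mul_s _
  · exact one_mul 1

lemma σ_pathRoot_succ (c : RootSystemData n) {t : ℕ} (ht : t < n) :
    c.σ (pathRoot n t (t + 1)) = c.sN t := by
  rw [pathRoot_succ c ht, sN_eq_s c ht, s]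

lemma sN_mem_Wsub (hr : r ≤ n) {t j : ℕ} (ht : t < j) (hj : j ≤ r) :
    c.sN t ∈ c.Wsub (deltaSet n r j) := by
  rw [sN_eq_s c (by omega)]
  exact s_mem_Wsub ((mem_deltaSet hj).2 ht)

lemma deltaSet_subset_succ {j : ℕ} (hj : j < r + 1) :
    deltaSet n r j ⊆ deltaSet n r (j + 1) := by
  rcases (Nat.le_of_lt_succ hj).eq_or_lt with rfl | hjr
  · simp [deltaSet]
  · intro i hi
    rw [mem_deltaSet hjr.le] at hi
    exact (mem_deltaSet hjr).2 (Nat.lt_succ_of_lt hi)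

/-- The permutation of `ℕ` which sends `j` to `k`, shifts `k, …, j - 1` up by one and fixes all
other numbers, for `k ≤ j`; it describes the action of `s_{k+1} ⋯ s_j` on the indices of the
vectors `pathRoot n a b`. -/
def cycleIcc (k j x : ℕ) : ℕ := if x = j then k else if k ≤ x ∧ x < j then x + 1 else x

lemma cycleIcc_self (k x : ℕ) : cycleIcc k k x = x := by
  simp only [cycleIcc]
  split_ifs <;> omega

lemma cycleIcc_right (k j : ℕ) : cycleIcc k j j = k := if_pos rfl

lemma cycleIcc_of_lt {k j x : ℕ} (hx : x < k) (hkj : k ≤ j) : cycleIcc k j x = x := by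
  simp only [cycleIcc]
  split_ifs <;> omega

lemma cycleIcc_of_mem {k j x : ℕ} (hk : k ≤ x) (hj : x < j) : cycleIcc k j x = x + 1 := by
  simp [cycleIcc, hj.ne, hk, hj]

lemma cycleIcc_lt_cycleIcc {k j x y : ℕ} (hxy : x < y) (hy : y < j) :
    cycleIcc k j x < cycleIcc k j y := by
  simp only [cycleIcc]
  split_ifs <;> omega

lemma cycleIcc_swap {k j : ℕ} (hkj : k ≤ j) (x : ℕ) :
    cycleIcc k j (Equiv.swap j (j + 1) x) = cycleIcc k (j + 1) x := by
  rw [Equiv.swap_apply_def]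
  simp only [cycleIcc]
  split_ifs <;> omega

lemma uElt_zero_left (c : RootSystemData n) (m : ℕ) : c.uElt 0 m = 1 := by
  simp [uElt, uu]

lemma uElt_zero_right (c : RootSystemData n) (i : ℕ) : c.uElt i 0 = 1 := by
  simp [uElt, uu]

lemma uElt_succ_succ (c : RootSystemData n) (i m : ℕ) :
    c.uElt (i + 1) (m + 1) = c.uElt i m * c.sN m := by
  have hlen : m + 1 + 1 - (m - i + 1) = m + 1 - (m - i + 1) + 1 := by omega
  simp [uElt, uu, hlen, List.range'_1_concat]

lemma uElt_succ_left (c : RootSystemData n) {i m t : ℕ} (h : t + i + 1 = m) :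
    c.uElt (i + 1) m = c.sN t * c.uElt i m := by
  have hstart : m - (i + 1) + 1 = t + 1 := by omega
  have hstart' : m - i + 1 = t + 1 + 1 := by omega
  have hlen : m + 1 - (t + 1) = m + 1 - (t + 1 + 1) + 1 := by omega
  rw [uElt, uElt, hstart, hstart', uu, uu, hlen, List.range'_succ]
  simp

lemma uElt_mem_Wsub (hr : r ≤ n) (i : ℕ) {m : ℕ} (hm : m ≤ r) :
    c.uElt i m ∈ c.Wsub (deltaSet n r m) := by
  induction m generalizing i with
  | zero => rw [uElt_zero_right]; exact one_mem _
  | succ m ih =>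
    cases i with
    | zero => rw [uElt_zero_left]; exact one_mem _
    | succ i =>
      rw [uElt_succ_succ]
      exact mul_mem (Wsub_mono (deltaSet_subset_succ (by omega)) (ih i (by omega)))
        (sN_mem_Wsub hr m.lt_succ_self hm)

lemma PathA.act_uElt_pathRoot (hA : c.PathA r) (hr : r ≤ n) (i : ℕ) {m a b : ℕ} (hm : m ≤ r)
    (ha : a ≤ r) (hb : b ≤ r) :
    c.act (c.uElt i m) (pathRoot n a b) =
      pathRoot n (cycleIcc (m - i) m a) (cycleIcc (m - i) m b) := by
  induction m generalizing i a b with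
  | zero => rw [uElt_zero_right, c.act_one, Nat.zero_sub, cycleIcc_self, cycleIcc_self]
  | succ m ih =>
    cases i with
    | zero => rw [uElt_zero_left, c.act_one, Nat.sub_zero, cycleIcc_self, cycleIcc_self]
    | succ i =>
      have hswap {x : ℕ} (hx : x ≤ r) : Equiv.swap m (m + 1) x ≤ r := by
        rw [Equiv.swap_apply_def]
        split_ifs <;> omega
      rw [uElt_succ_succ, c.act_mul, sN_eq_s c (by omega),
        hA.act_s_pathRoot hr (t := ⟨m, _⟩) hm ha hb, ih i (by omega) (hswap ha) (hswap hb),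
        cycleIcc_swap (Nat.sub_le m i), cycleIcc_swap (Nat.sub_le m i), Nat.add_sub_add_right]

lemma PathA.uElt_mul_σ_pathRoot (hA : c.PathA r) (hr : r ≤ n) (i : ℕ) {m a b : ℕ} (hm : m ≤ r)
    (hab : a < b) (hb : b ≤ r) :
    c.uElt i m * c.σ (pathRoot n a b) =
      c.σ (pathRoot n (cycleIcc (m - i) m a) (cycleIcc (m - i) m b)) * c.uElt i m := by
  rw [mul_σ c _ (hA.pathRoot_mem hr hab hb), hA.act_uElt_pathRoot hr i hm (by omega) hb]

lemma PathA.uElt_mul_sN (hA : c.PathA r) (hr : r ≤ n) {i m t : ℕ} (hm : m ≤ r)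
    (ht : m ≤ t + i) (htm : t + 1 < m) : c.uElt i m * c.sN t = c.sN (t + 1) * c.uElt i m := by
  have h := hA.uElt_mul_σ_pathRoot hr i hm t.lt_succ_self (by omega)
  rwa [cycleIcc_of_mem (by omega) (by omega), cycleIcc_of_mem (by omega) htm,
    σ_pathRoot_succ c (by omega), σ_pathRoot_succ c (by omega)] at h

lemma PathA.commute_uElt_sN (hA : c.PathA r) (hr : r ≤ n) {i m t : ℕ} (hm : m ≤ r)
    (ht : t + 1 + i < m) : Commute (c.uElt i m) (c.sN t) := by
  have h := hA.uElt_mul_σ_pathRoot hr i hm t.lt_succ_self (by omega)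
  rwa [cycleIcc_of_lt (by omega) (by omega), cycleIcc_of_lt (by omega) (by omega),
    σ_pathRoot_succ c (by omega)] at h

lemma PathA.uElt_self_mul_uElt (hA : c.PathA r) (hr : r ≤ n) {i p m : ℕ} (hip : i ≤ p)
    (hpm : p < m) (hm : m ≤ r) :
    c.uElt m m * c.uElt i p = c.uElt i (p + 1) * c.uElt m m := by
  induction p generalizing i with
  | zero => rw [Nat.le_zero.1 hip, uElt_zero_left, uElt_zero_left, mul_one, one_mul]
  | succ p ih =>
    cases i with
    | zero => rw [uElt_zero_left, uElt_zero_left, mul_one, one_mul]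
    | succ i =>
      calc c.uElt m m * c.uElt (i + 1) (p + 1)
          = c.uElt i (p + 1) * c.uElt m m * c.sN p := by
            rw [uElt_succ_succ, ← mul_assoc, ih (by omega) (by omega)]
        _ = c.uElt (i + 1) (p + 2) * c.uElt m m := by
            rw [mul_assoc, hA.uElt_mul_sN hr hm (by omega) hpm, ← mul_assoc, ← uElt_succ_succ]

lemma PathA.len_uElt (hA : c.PathA r) (hr : r ≤ n) {i m : ℕ} (him : i ≤ m) (hm : m ≤ r) :
    c.len (c.uElt i m) = i := by
  induction m generalizing i with
  | zero => rw [Nat.le_zero.1 him, uElt_zero_left, len_one]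
  | succ m ih =>
    cases i with
    | zero => rw [uElt_zero_left, len_one]
    | succ i =>
      have hpos : 0 ≤ c.act (c.uElt i m) (c.sroot ⟨m, by omega⟩) := by
        rw [← pathRoot_succ c, hA.act_uElt_pathRoot hr i (by omega) (by omega) hm,
          cycleIcc_right]
        refine pathRoot_nonneg ?_
        simp only [cycleIcc]
        split_ifs <;> omega
      rw [uElt_succ_succ, sN_eq_s c (by omega), c.len_mul_s_of_nonneg hpos,
        ih (by omega) (by omega)]

lemma PathA.isPositiveOn_uElt (hA : c.PathA r) (hr : r ≤ n) (i : ℕ) {j : ℕ} (hj : j + 1 ≤ r) :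
    c.IsPositiveOn (deltaSet n r j) (c.uElt i (j + 1)) := by
  intro t ht
  rw [mem_deltaSet (by omega)] at ht
  rw [← pathRoot_succ c t.2, hA.act_uElt_pathRoot hr i hj (by omega) (by omega)]
  exact pathRoot_nonneg (cycleIcc_lt_cycleIcc (Nat.lt_succ_self _) (by omega)).le

lemma PathA.minRep_uElt (hA : c.PathA r) (hr : r ≤ n) (i : ℕ) {j : ℕ} (hj : j + 1 ≤ r) :
    c.MinRep (deltaSet n r (j + 1)) (deltaSet n r j) (c.uElt i (j + 1)) :=
  (hA.isPositiveOn_uElt hr i hj).minRep (uElt_mem_Wsub hr i hj)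

lemma PathA.exists_uElt_mul (hA : c.PathA r) (hr : r ≤ n) {j : ℕ} (hj : j + 1 ≤ r) {w : c.W}
    (hw : w ∈ c.Wsub (deltaSet n r (j + 1))) :
    ∃ i ≤ j + 1, ∃ u ∈ c.Wsub (deltaSet n r j), w = c.uElt i (j + 1) * u := by
  -- The union of the cosets `u_i^{(j+1)} W_{Δ_j}` is stable under left multiplication by `s_t`.
  induction hw using Wsub_induction_left with
  | one => exact ⟨0, Nat.zero_le _, 1, one_mem _, by rw [uElt_zero_left, mul_one]⟩
  | s_mul t ht _ _ ih =>
    obtain ⟨i, hi, u, hu, rfl⟩ := ih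
    obtain ⟨t, htn⟩ := t
    have htj : t < j + 1 := (mem_deltaSet hj).1 ht
    rw [← sN_eq_s c htn]
    obtain h | h | h | h : t + 1 + i < j + 1 ∨ t + i + 1 = j + 1 ∨ t + i = j + 1 ∨
      j + 1 < t + i := by omega
    · refine ⟨i, hi, c.sN t * u, mul_mem (sN_mem_Wsub hr (by omega) (by omega)) hu, ?_⟩
      rw [← mul_assoc, ← mul_assoc, (hA.commute_uElt_sN hr hj h).eq]
    · exact ⟨i + 1, by omega, u, hu, by rw [uElt_succ_left c h, mul_assoc]⟩
    · obtain ⟨i, rfl⟩ := Nat.exists_eq_succ_of_ne_zero (show i ≠ 0 by omega)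
      refine ⟨i, by omega, u, hu, ?_⟩
      rw [uElt_succ_left c (t := t) (by omega), mul_assoc, ← mul_assoc, sN_mul_sN, one_mul]
    · obtain ⟨t, rfl⟩ := Nat.exists_eq_succ_of_ne_zero (show t ≠ 0 by omega)
      refine ⟨i, hi, c.sN t * u, mul_mem (sN_mem_Wsub hr (by omega) (by omega)) hu, ?_⟩
      rw [← mul_assoc, ← mul_assoc, hA.uElt_mul_sN hr hj (by omega) htj]

lemma PathA.exists_eq_uElt (hA : c.PathA r) (hr : r ≤ n) {j : ℕ} (hj : j + 1 ≤ r) {v : c.W}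
    (hv : c.MinRep (deltaSet n r (j + 1)) (deltaSet n r j) v) :
    ∃ i ≤ j + 1, v = c.uElt i (j + 1) := by
  obtain ⟨i, hi, u, hu, rfl⟩ := hA.exists_uElt_mul hr hj hv.1
  exact ⟨i, hi, hv.isPositiveOn.eq_of_mul_eq_mul (hA.isPositiveOn_uElt hr i hj) (one_mem _) hu
    (mul_one _)⟩

lemma PathA.len_le (hA : c.PathA r) (hr : r ≤ n) {j : ℕ} (hj : j + 1 ≤ r) {v : c.W}
    (hv : c.MinRep (deltaSet n r (j + 1)) (deltaSet n r j) v) : c.len v ≤ j + 1 := by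
  obtain ⟨i, hi, rfl⟩ := hA.exists_eq_uElt hr hj hv
  rwa [hA.len_uElt hr hi hj]

lemma PathA.eq_uElt_len (hA : c.PathA r) (hr : r ≤ n) {j : ℕ} (hj : j + 1 ≤ r) {v : c.W}
    (hv : c.MinRep (deltaSet n r (j + 1)) (deltaSet n r j) v) :
    v = c.uElt (c.len v) (j + 1) := by
  obtain ⟨i, hi, rfl⟩ := hA.exists_eq_uElt hr hj hv
  rw [hA.len_uElt hr hi hj]

lemma PathA.commute_sN_of_mem_Wsub (hA : c.PathA r) (hr : r ≤ n) {j : ℕ} (hj : j + 2 ≤ r)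
    {u : c.W} (hu : u ∈ c.Wsub (deltaSet n r j)) : Commute u (c.sN (j + 1)) := by
  rw [sN_eq_s c (by omega), s]
  refine commute_σ_of_mem_Wsub hu (c.sroot_mem _) fun i hi => ?_
  have hij : (i : ℕ) < j := (mem_deltaSet (by omega)).1 hi
  rw [pair_sroot_single]
  exact (hA ⟨j + 1, _⟩ i hj (by omega)).2 (.inr (by simp only; omega))

lemma PathA.sN_mul_σ_pathRoot (hA : c.PathA r) (hr : r ≤ n) {a b : ℕ} (hab : a < b) (hb : b < r) :
    c.sN b * c.σ (pathRoot n a (b + 1)) = c.σ (pathRoot n a b) * c.sN b := by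
  rw [sN_eq_s c (hb.trans_le hr), mul_σ c _ (hA.pathRoot_mem hr (by omega) hb),
    ← hA.act_s_pathRoot_left hr hab hb, act_s_act_s]

end Cycle

/-! ### Decompositions and degrees -/

section Degree

variable {n : ℕ} {c : RootSystemData n} {r : ℕ}

lemma IsDecomp.exists_isTower {w : c.W} {v : Fin (r + 1) → c.W} (hv : c.IsDecomp r w v) :
    ∃ f : ℕ → c.W, c.IsTower (deltaSet n r) (r + 1) f ∧ w = descProd f (r + 1) ∧
      ∀ k, v k = f k := by
  let f : ℕ → c.W := fun j => if hj : j < r + 1 then v ⟨j, hj⟩ else 1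
  have hvf (k : Fin (r + 1)) : v k = f k := by simp only [f, dif_pos k.2]
  refine ⟨f, fun j hj => hvf ⟨j, hj⟩ ▸ hv.1 ⟨j, hj⟩, ?_, hvf⟩
  rw [hv.2, funext hvf, reverse_ofFn_prod]

lemma IsDecomp.eq_of_isTower {f : ℕ → c.W} (hf : c.IsTower (deltaSet n r) (r + 1) f)
    {v : Fin (r + 1) → c.W} (hv : c.IsDecomp r (descProd f (r + 1)) v) (k : Fin (r + 1)) :
    v k = f k := by
  obtain ⟨g, hg, hfg, hvg⟩ := hv.exists_isTower
  rw [hvg]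
  exact hg.eq_of_descProd_eq hf (fun _ => deltaSet_subset_succ) le_rfl hfg.symm k k.2

/-- The degree `gr(w) = Σ ℓ(v_i) e_i` of the element `w` with the factors `v_i = f (i - 1)`. -/
noncomputable def gr (c : RootSystemData n) (r : ℕ) (f : ℕ → c.W) : Fin (r + 1) → ℤ :=
  fun k => c.len (f k)

lemma IsTower.sum_gr {f : ℕ → c.W} (hf : c.IsTower (deltaSet n r) (r + 1) f) :
    ∑ k, c.gr r f k = c.len (descProd f (r + 1)) := by
  rw [hf.len_descProd (fun _ => deltaSet_subset_succ) le_rfl, Finset.sum_range]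
  push_cast
  rfl

lemma IsTower.len_descProd_eq_of_add_gr {f g : ℕ → c.W}
    (hf : c.IsTower (deltaSet n r) (r + 1) f) (hg : c.IsTower (deltaSet n r) (r + 1) g)
    {x : Fin (r + 1) → ℤ} {k : Fin (r + 1)} (h : x + c.gr r g = c.gr r f + Pi.single k 1) :
    (c.len (descProd g (r + 1)) : ℤ) = c.len (descProd f (r + 1)) + 1 - ∑ j, x j := by
  have hsum := congrArg (fun y : Fin (r + 1) → ℤ => ∑ j, y j) h
  simp only [Pi.add_apply, Finset.sum_add_distrib, hf.sum_gr, hg.sum_gr,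
    Finset.sum_pi_single', Finset.mem_univ, if_true] at hsum
  exact eq_sub_of_add_eq' hsum

lemma grQlam_add (x y : Fin n → ℤ) : grQlam n r (x + y) = grQlam n r x + grQlam n r y := by
  funext k
  simp [grQlam, add_mul, Finset.sum_add_distrib]

lemma grQlam_single (j : Fin n) : grQlam n r (Pi.single j 1) = grQ r j := by
  funext k
  simp [grQlam, Pi.single_apply]

lemma grQlam_headSum {b : ℕ} (hb : b ≤ n) (k : Fin (r + 1)) :
    grQlam n r (headSum n b) k =
      (if (k : ℕ) < b then (k : ℤ) + 2 else 0) - (if (k : ℕ) + 1 < b then (k : ℤ) + 1 else 0) := by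
  induction b with
  | zero => simp [grQlam, headSum]
  | succ b ih =>
    rw [headSum_succ hb, grQlam_add, grQlam_single, Pi.add_apply, ih (by omega), grQ]
    dsimp only
    split_ifs <;> omega

lemma grQlam_pathRoot_add (a b : ℕ) :
    grQlam n r (pathRoot n a b) + grQlam n r (headSum n a) = grQlam n r (headSum n b) := by
  rw [← grQlam_add, pathRoot, sub_add_cancel]

lemma sum_grQ {j : ℕ} (hj : j < r) : ∑ k, grQ r j k = 2 := by
  have hsum : ∑ k, grQ r j k = ∑ k ∈ Finset.range (r + 1),
      ((if k = j then (j : ℤ) + 2 else 0) + if k + 1 = j then -(j : ℤ) else 0) :=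
    (Finset.sum_range fun k : ℕ =>
      (if k = j then (j : ℤ) + 2 else 0) + if k + 1 = j then -(j : ℤ) else 0).symm
  rw [hsum, Finset.sum_add_distrib, Finset.sum_ite_eq', if_pos (by simp; omega)]
  cases j with
  | zero => simp
  | succ j =>
    simp only [Nat.add_right_cancel_iff, Finset.sum_ite_eq']
    rw [if_pos (by simp; omega)]
    ring

lemma sum_grQlam (c : RootSystemData n) {l : Fin n → ℤ} (hl : suppIn (deltaSet n r r) l) :
    ∑ k, grQlam n r l k = c.pairTwoRho l := by
  rw [pairTwoRho_eq_sum]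
  simp only [grQlam]
  rw [Finset.sum_comm]
  refine Finset.sum_congr rfl fun j _ => ?_
  rw [← Finset.mul_sum]
  by_cases hj : j ∈ deltaSet n r r
  · rw [sum_grQ ((mem_deltaSet le_rfl).1 hj)]
  · rw [hl j hj, zero_mul, zero_mul]

end Degree

/-! ### The raising moves -/

section Raising

variable {n : ℕ} {c : RootSystemData n} {r : ℕ} {f : ℕ → c.W} {a m : ℕ}

lemma IsTower.exists_raise_of_len_lt (hf : c.IsTower (deltaSet n r) (r + 1) f) (hA : c.PathA r)
    (hr : r ≤ n) (hm : m < r) (hlen : c.len (f m) < m + 1) :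
    ∃ γ ∈ c.R, 0 ≤ γ ∧ c.cor γ ⟨m, hm.trans_le hr⟩ = 1 ∧
      ∃ g, c.IsTower (deltaSet n r) (r + 1) g ∧
        descProd g (r + 1) = descProd f (r + 1) * c.σ γ ∧
        c.gr r g = c.gr r f + Pi.single ⟨m, Nat.lt_succ_of_lt hm⟩ 1 := by
  -- Conjugating by `u = v_{m-1} ⋯ v_1` turns multiplication of `v_m` by `s_{α_k + ⋯ + α_m}`, which
  -- adds the letter `s_k` on its left, into multiplication of `w` by the reflection in `γ`.
  have hfm := hA.eq_uElt_len hr hm (hf m (by omega))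
  obtain ⟨i, hi⟩ : ∃ i, c.len (f m) = i := ⟨_, rfl⟩
  rw [hi] at hfm hlen
  obtain ⟨k, hk⟩ : ∃ k, k + i = m := ⟨m - i, by omega⟩
  have hu : (descProd f m)⁻¹ ∈ c.Wsub (deltaSet n r m) :=
    inv_mem (hf.descProd_mem (fun _ => deltaSet_subset_succ) (by omega))
  have hβ : pathRoot n k (m + 1) ∈ c.R := hA.pathRoot_mem hr (by omega) hm
  have hβm : pathRoot n k (m + 1) ⟨m, hm.trans_le hr⟩ = 1 :=
    pathRoot_apply_eq_one (by simp only; omega) m.lt_succ_self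
  have hmS : (⟨m, hm.trans_le hr⟩ : Fin n) ∉ deltaSet n r m := by simp [mem_deltaSet hm.le]
  have hadd : f m * c.σ (pathRoot n k (m + 1)) = c.uElt (i + 1) (m + 1) := by
    rw [hfm, hA.uElt_mul_σ_pathRoot hr i hm (by omega) hm, cycleIcc_right,
      cycleIcc_of_lt (by omega) (by omega), show m + 1 - i = k + 1 by omega,
      σ_pathRoot_succ c (by omega), uElt_succ_left c (t := k) (by omega)]
  refine ⟨c.act (descProd f m)⁻¹ (pathRoot n k (m + 1)), c.act_mem _ _ hβ,
    act_nonneg_of_mem_Wsub hu hmS hβ (hβm ▸ one_pos), ?_,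
    Function.update f m (c.uElt (i + 1) (m + 1)), hf.update (hA.minRep_uElt hr _ hm), ?_, ?_⟩
  · rw [cor_act_apply_of_mem_Wsub hu hmS hβ, hA.cor_pathRoot hr (by omega) hm, hβm]
  · refine descProd_eq_mul_of_eq_above (m := m + 1) ?_ (by omega)
      fun j hj => Function.update_of_ne (by omega) _ _
    have hbelow : descProd (Function.update f m (c.uElt (i + 1) (m + 1))) m = descProd f m :=
      descProd_congr fun j hj => Function.update_of_ne hj.ne _ _
    rw [descProd, descProd, hbelow, Function.update_self, ← hadd, c.refl_act _ _ hβ]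
    group
  · funext j
    rcases eq_or_ne (j : ℕ) m with hj | hj
    · simp [gr, hj, hi, hA.len_uElt hr hlen hm, Pi.single_apply, Fin.ext_iff]
    · simp [gr, hj, Fin.ext_iff]

lemma exists_start_of_run (p : ℕ → Prop) (m : ℕ) :
    ∃ a ≤ m, (∀ j, a ≤ j → j < m → p j) ∧ ∀ b, b + 1 = a → ¬ p b := by
  induction m with
  | zero => exact ⟨0, le_rfl, fun j _ hj => absurd hj j.not_lt_zero, fun b hb => by omega⟩
  | succ m ih =>
    by_cases hm : p m
    · obtain ⟨a, ham, hrun, hstart⟩ := ih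
      refine ⟨a, Nat.le_succ_of_le ham, fun j haj hj => ?_, hstart⟩
      rcases Nat.lt_succ_iff_lt_or_eq.1 hj with hj | rfl
      · exact hrun j haj hj
      · exact hm
    · refine ⟨m + 1, le_rfl, fun j haj hj => by omega, fun b hb => ?_⟩
      rwa [Nat.succ_injective hb]

/-- The factors of `w s_γ` for `γ = α_{a+1} + ⋯ + α_{m+1}` when `f m` has length `m + 1`, the
factors `f a, …, f (m-1)` are nontrivial and `f (a-1) = 1`: the factor of index `m` becomes
trivial, those of index `a ≤ j < m` lose their first letter, and the one of index `a - 1` becomes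
`s_1 ⋯ s_a`. -/
noncomputable def lowered (f : ℕ → c.W) (a m : ℕ) : ℕ → c.W := fun j =>
  if j = m then 1
  else if a ≤ j ∧ j < m then c.uElt (c.len (f j) - 1) (j + 1)
  else if j + 1 = a then c.uElt a a
  else f j

lemma lowered_self : lowered f a m m = 1 := if_pos rfl

lemma lowered_of_mem {j : ℕ} (ha : a ≤ j) (hm : j < m) :
    lowered f a m j = c.uElt (c.len (f j) - 1) (j + 1) := by
  simp [lowered, hm.ne, ha, hm]

lemma lowered_of_succ_eq {j : ℕ} (hm : j < m) (ha : j + 1 = a) :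
    lowered f a m j = c.uElt a a := by
  have haj : ¬ a ≤ j := by omega
  simp [lowered, hm.ne, haj, ha]

lemma lowered_of_lt_or_gt {j : ℕ} (ham : a ≤ m) (hj : j + 1 < a ∨ m < j) :
    lowered f a m j = f j := by
  have hjm : j ≠ m := by omega
  have hrun : ¬ (a ≤ j ∧ j < m) := by omega
  have hja : j + 1 ≠ a := by omega
  simp [lowered, hjm, hrun, hja]

lemma IsTower.isTower_lowered (hf : c.IsTower (deltaSet n r) (r + 1) f) (hA : c.PathA r)
    (hr : r ≤ n) (ham : a ≤ m) (hm : m < r) :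
    c.IsTower (deltaSet n r) (r + 1) (lowered f a m) := by
  intro j hj
  unfold lowered
  split_ifs with hjm hrun hja
  · exact uElt_zero_left c (j + 1) ▸ hA.minRep_uElt hr 0 (by omega)
  · exact hA.minRep_uElt hr _ (by omega)
  · exact hja ▸ hA.minRep_uElt hr _ (by omega)
  · exact hf j hj

lemma PathA.uElt_self_mul_mul_σ (hA : c.PathA r) (hr : r ≤ n) {i j : ℕ} (haj : a ≤ j)
    (hij : i ≤ j) (hj : j + 2 ≤ r) {u : c.W} (hu : u ∈ c.Wsub (deltaSet n r j))
    (hp : c.uElt (j + 1) (j + 1) * u * c.σ (pathRoot n a (j + 1)) ∈ c.Wsub (deltaSet n r j)) :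
    c.uElt (j + 2) (j + 2) * (c.uElt (i + 1) (j + 1) * u) * c.σ (pathRoot n a (j + 2)) =
      c.uElt i (j + 1) * (c.uElt (j + 1) (j + 1) * u * c.σ (pathRoot n a (j + 1))) := by
  have hshift := hA.uElt_self_mul_uElt hr (i := i + 1) (p := j + 1) (by omega)
    (Nat.lt_succ_self _) hj
  have hσ := hA.sN_mul_σ_pathRoot hr (Nat.lt_succ_of_le haj) hj
  have hus := (hA.commute_sN_of_mem_Wsub hr hj hu).eq
  have hps := (hA.commute_sN_of_mem_Wsub hr hj hp).eq
  have hlast := uElt_succ_succ c (j + 1) (j + 1)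
  set t := c.sN (j + 1) with ht
  set U := c.uElt (j + 1) (j + 1)
  set β := pathRoot n a (j + 1)
  calc c.uElt (j + 2) (j + 2) * (c.uElt (i + 1) (j + 1) * u) * c.σ (pathRoot n a (j + 2))
      = c.uElt i (j + 1) * t * U * (t * u) * c.σ (pathRoot n a (j + 2)) := by
        rw [← mul_assoc, hshift, hlast, uElt_succ_succ, ← ht]
        simp only [mul_assoc]
    _ = c.uElt i (j + 1) * t * U * u * (t * c.σ (pathRoot n a (j + 2))) := by
        rw [← hus]
        simp only [mul_assoc]
    _ = c.uElt i (j + 1) * t * (U * u * c.σ β * t) := by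
        rw [hσ]
        simp only [mul_assoc]
    _ = c.uElt i (j + 1) * (t * t) * (U * u * c.σ β) := by
        rw [hps]
        simp only [mul_assoc]
    _ = c.uElt i (j + 1) * (U * u * c.σ β) := by rw [sN_mul_sN, mul_one]

lemma IsTower.uElt_mul_descProd_start (hf : c.IsTower (deltaSet n r) (r + 1) f) (hA : c.PathA r)
    (hr : r ≤ n) (ham : a ≤ m) (hm : m < r) (hstart : ∀ b, b + 1 = a → f b = 1) :
    c.uElt (a + 1) (a + 1) * descProd f a * c.sN a = descProd (lowered f a m) a := by
  rw [uElt_succ_succ]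
  cases a with
  | zero => rw [descProd, descProd, uElt_zero_left, one_mul, mul_one, sN_mul_sN]
  | succ b =>
    have hbelow : descProd (lowered f (b + 1) m) b = descProd f b :=
      descProd_congr fun j hj => lowered_of_lt_or_gt ham (by omega)
    have hcomm := (hA.commute_sN_of_mem_Wsub hr (by omega)
      (hf.descProd_mem (fun _ => deltaSet_subset_succ) (show b ≤ r + 1 by omega))).eq
    rw [descProd, descProd, hbelow, lowered_of_succ_eq ham rfl, hstart b rfl, one_mul, mul_assoc,
      hcomm, mul_assoc, ← mul_assoc (c.sN _), sN_mul_sN, one_mul]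

lemma IsTower.uElt_mul_descProd_mul_σ (hf : c.IsTower (deltaSet n r) (r + 1) f) (hA : c.PathA r)
    (hr : r ≤ n) (hm : m < r) (hrun : ∀ j, a ≤ j → j < m → f j ≠ 1)
    (hstart : ∀ b, b + 1 = a → f b = 1) {j : ℕ} (haj : a ≤ j) (hjm : j ≤ m) :
    c.uElt (j + 1) (j + 1) * descProd f j * c.σ (pathRoot n a (j + 1)) =
      descProd (lowered f a m) j := by
  induction j, haj using Nat.le_induction with
  | base => rw [σ_pathRoot_succ c (by omega), hf.uElt_mul_descProd_start hA hr hjm hm hstart]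
  | succ j haj ih =>
    have ih := ih (by omega)
    have hg := hf.isTower_lowered hA hr (a := a) (m := m) (by omega) hm
    have hfj := hf j (by omega)
    have hlen_le := hA.len_le hr (by omega) hfj
    have hfj' := hA.eq_uElt_len hr (by omega) hfj
    obtain ⟨i, hi⟩ := Nat.exists_eq_succ_of_ne_zero fun h =>
      hrun j haj hjm (c.eq_one_of_len_eq_zero h)
    rw [hi, Nat.succ_eq_add_one] at hfj' hlen_le
    have hp := hg.descProd_mem (fun _ => deltaSet_subset_succ) (show j ≤ r + 1 by omega)
    rw [← ih] at hp
    rw [descProd, descProd, lowered_of_mem haj hjm, hi, hfj', ← ih]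
    exact hA.uElt_self_mul_mul_σ hr haj (by omega) (by omega)
      (hf.descProd_mem (fun _ => deltaSet_subset_succ) (by omega)) hp

lemma IsTower.descProd_lowered (hf : c.IsTower (deltaSet n r) (r + 1) f) (hA : c.PathA r)
    (hr : r ≤ n) (ham : a ≤ m) (hm : m < r) (hlen : c.len (f m) = m + 1)
    (hrun : ∀ j, a ≤ j → j < m → f j ≠ 1) (hstart : ∀ b, b + 1 = a → f b = 1) :
    descProd (lowered f a m) (r + 1) =
      descProd f (r + 1) * c.σ (pathRoot n a (m + 1)) := by
  refine descProd_eq_mul_of_eq_above (m := m + 1) ?_ (by omega)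
    fun j hj => lowered_of_lt_or_gt ham (by omega)
  have hfm := hA.eq_uElt_len hr hm (hf m (by omega))
  rw [hlen] at hfm
  rw [descProd, descProd, lowered_self, one_mul, hfm,
    hf.uElt_mul_descProd_mul_σ hA hr hm hrun hstart ham le_rfl]

lemma IsTower.grQlam_add_gr_lowered (hf : c.IsTower (deltaSet n r) (r + 1) f) (hA : c.PathA r)
    (hr : r ≤ n) (ham : a ≤ m) (hm : m < r) (hlen : c.len (f m) = m + 1)
    (hrun : ∀ j, a ≤ j → j < m → f j ≠ 1) (hstart : ∀ b, b + 1 = a → f b = 1) :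
    grQlam n r (pathRoot n a (m + 1)) + c.gr r (lowered f a m) =
      c.gr r f + Pi.single ⟨m, Nat.lt_succ_of_lt hm⟩ 1 := by
  funext k
  have hQ := congrFun (grQlam_pathRoot_add (n := n) (r := r) a (m + 1)) k
  rw [Pi.add_apply, grQlam_headSum (by omega), grQlam_headSum (by omega)] at hQ
  simp only [Pi.add_apply, gr, Pi.single_apply, Fin.ext_iff]
  obtain hk | hk | hk | hk : (k : ℕ) = m ∨ (a ≤ (k : ℕ) ∧ (k : ℕ) < m) ∨ (k : ℕ) + 1 = a ∨
    ((k : ℕ) + 1 < a ∨ m < k) := by omega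
  · rw [hk, lowered_self, len_one, hlen]
    split_ifs at hQ ⊢ <;> omega
  · have hne : c.len (f k) ≠ 0 := fun h => hrun k hk.1 hk.2 (c.eq_one_of_len_eq_zero h)
    have hle := hA.len_le hr (by omega) (hf k k.2)
    rw [lowered_of_mem hk.1 hk.2, hA.len_uElt hr (by omega) (by omega)]
    split_ifs at hQ ⊢ <;> omega
  · rw [lowered_of_succ_eq (by omega) hk, hstart k hk, len_one,
      hA.len_uElt hr le_rfl (by omega)]
    split_ifs at hQ ⊢ <;> omega
  · rw [lowered_of_lt_or_gt ham hk]
    split_ifs at hQ ⊢ <;> omega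

lemma IsTower.exists_raise_of_len_eq (hf : c.IsTower (deltaSet n r) (r + 1) f) (hA : c.PathA r)
    (hr : r ≤ n) (hm : m < r) (hlen : c.len (f m) = m + 1) :
    ∃ γ ∈ c.R, 0 ≤ γ ∧ suppIn (deltaSet n r r) (c.cor γ) ∧ c.cor γ ⟨m, hm.trans_le hr⟩ = 1 ∧
      ∃ g, c.IsTower (deltaSet n r) (r + 1) g ∧
        descProd g (r + 1) = descProd f (r + 1) * c.σ γ ∧
        grQlam n r (c.cor γ) + c.gr r g =
          c.gr r f + Pi.single ⟨m, Nat.lt_succ_of_lt hm⟩ 1 := by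
  obtain ⟨a, ham, hrun, hstart⟩ := exists_start_of_run (fun j => f j ≠ 1) m
  have hstart' : ∀ b, b + 1 = a → f b = 1 := fun b hb => not_not.1 (hstart b hb)
  refine ⟨pathRoot n a (m + 1), hA.pathRoot_mem hr (by omega) hm, pathRoot_nonneg (by omega), ?_⟩
  rw [hA.cor_pathRoot hr (by omega) hm]
  exact ⟨suppIn_pathRoot (by omega) hm, pathRoot_apply_eq_one ham m.lt_succ_self,
    lowered f a m, hf.isTower_lowered hA hr ham hm,
    hf.descProd_lowered hA hr ham hm hlen hrun hstart',
    hf.grQlam_add_gr_lowered hA hr ham hm hlen hrun hstart'⟩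

end Raising

end RootSystemData

/-- Let `w = v_{r+1} ⋯ v_1` be the decomposition of `w` and `1 ≤ m ≤ r`, with `Δ_P`
of type `A_r`.
(1) If `ℓ(v_m) < m` there is `γ ∈ R^+` with `⟨χ_m, γ^∨⟩ = 1`,
`ℓ(w s_γ) = ℓ(w) + 1` and `gr(w s_γ) = gr(w) + e_m`.
(2) If `ℓ(v_m) = m` there is `γ ∈ R^+` with `γ^∨ ∈ Q_P^∨`, `⟨χ_m, γ^∨⟩ = 1`,
`ℓ(w s_γ) = ℓ(w) + 1 - ⟨2ρ, γ^∨⟩` and `gr(q_{γ^∨}) + gr(w s_γ) = gr(w) + e_m`. -/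
theorem gr_raising_elements {n : ℕ} (c : RootSystemData n)
    (r : ℕ) (hr1 : 1 ≤ r) (hrn : r < n) (hA : c.PathA r)
    (w : c.W) (v : Fin (r + 1) → c.W) (hv : c.IsDecomp r w v)
    (m : ℕ) (hm1 : 1 ≤ m) (hmr : m ≤ r) :
    (c.len (v ⟨m - 1, by omega⟩) < m →
      ∃ γ : Fin n → ℤ, γ ∈ c.R ∧ (∀ i, 0 ≤ γ i) ∧
        c.cor γ ⟨m - 1, by omega⟩ = 1 ∧
        c.len (w * c.σ γ) = c.len w + 1 ∧
        ∀ v' : Fin (r + 1) → c.W, c.IsDecomp r (w * c.σ γ) v' →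
          ∀ k : Fin (r + 1),
            (c.len (v' k) : ℤ) =
              (c.len (v k) : ℤ) + if (k : ℕ) = m - 1 then 1 else 0) ∧
    (c.len (v ⟨m - 1, by omega⟩) = m →
      ∃ γ : Fin n → ℤ, γ ∈ c.R ∧ (∀ i, 0 ≤ γ i) ∧
        suppIn (deltaSet n r r) (c.cor γ) ∧
        c.cor γ ⟨m - 1, by omega⟩ = 1 ∧
        (c.len (w * c.σ γ) : ℤ) = (c.len w : ℤ) + 1 - c.pairTwoRho (c.cor γ) ∧
        ∀ v' : Fin (r + 1) → c.W, c.IsDecomp r (w * c.σ γ) v' →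
          ∀ k : Fin (r + 1),
            grQlam n r (c.cor γ) k + (c.len (v' k) : ℤ) =
              (c.len (v k) : ℤ) + if (k : ℕ) = m - 1 then 1 else 0) := by
  obtain ⟨f, hf, rfl, hvf⟩ := hv.exists_isTower
  obtain ⟨m, rfl⟩ := Nat.exists_eq_add_of_le' hm1
  simp only [Nat.add_sub_cancel, hvf]
  refine ⟨fun hlen => ?_, fun hlen => ?_⟩
  · obtain ⟨γ, hγ, hpos, hcor, g, hg, hprod, hgr⟩ :=
      hf.exists_raise_of_len_lt hA hrn.le hmr hlen
    have hsum := hf.len_descProd_eq_of_add_gr hg ((zero_add _).trans hgr)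
    rw [Pi.zero_def, Finset.sum_const_zero, sub_zero] at hsum
    refine ⟨γ, hγ, hpos, hcor, hprod ▸ mod_cast hsum, fun v' hv' k => ?_⟩
    rw [← hprod] at hv'
    rw [hv'.eq_of_isTower hg]
    simpa [RootSystemData.gr, Pi.single_apply, Fin.ext_iff] using congrFun hgr k
  · obtain ⟨γ, hγ, hpos, hsupp, hcor, g, hg, hprod, hgr⟩ :=
      hf.exists_raise_of_len_eq hA hrn.le hmr hlen
    refine ⟨γ, hγ, hpos, hsupp, hcor, ?_, fun v' hv' k => ?_⟩
    · rw [← hprod, ← RootSystemData.sum_grQlam c hsupp]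
      exact hf.len_descProd_eq_of_add_gr hg hgr
    · rw [← hprod] at hv'
      rw [hv'.eq_of_isTower hg]
      simpa [RootSystemData.gr, Pi.single_apply, Fin.ext_iff] using congrFun hgr k
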